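/- Suppose that for every player i and every joint policy π ∈ Π the uncertainty set ℛ_i(π) ⊆ ℝ^𝒜 is nonempty and the functional x ↦ Σ_a p_π(a) x(a) is bounded below on ℛ_i(π). Define the regularizer Ω_i(π) := σ_{ℛ_i(π)}(−π_i π_{-i}ᵀ) and the regularized value Ṽ_i(π) := Σ_a p_π(a) r*_i(a) − Ω_i(π). Then a joint policy π is a robust Nash equilibrium of the robust matrix game if and only if π is a Nash equilibrium of the regularized game, i.e., for every i, Ṽ_i(π) = sup_{π_i' ∈ Δ(𝒜_i)} Ṽ_i(π_i', π_{-i}). -/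

import Mathlib

/-!
The two games have the same payoffs on `Π`: splitting the sum and using `inf f = -sup (-f)`,
`V_i(π) = ⟨p_π, r*_i⟩ + inf_x ⟨p_π, x⟩ = ⟨p_π, r*_i⟩ - σ_{ℛ_i(π)}(-p_π) = Ṽ_i(π)`
(`robustValue_eq_regValue`). Unilateral deviations stay in `Π`, so the two best-response conditions
are literally the same. In particular the sets of deviation payoffs coincide, so their suprema agree
whether or not these sets are bounded above.
-/

open scoped BigOperators

/-- The probability simplex `Δ(T)` over a finite set `T`. -/
def probSimplex (T : Type*) [Fintype T] : Set (T → ℝ) :=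
  {x | (∀ t, 0 ≤ x t) ∧ ∑ t, x t = 1}

/-- `p_π(a) = ∏_j π_j(a_j)`, the probability of joint action `a` under the
product joint policy `π`. -/
noncomputable def jointProb {N : ℕ} {A : Fin N → Type*} [∀ i, Fintype (A i)]
    (π : (j : Fin N) → A j → ℝ) (a : (j : Fin N) → A j) : ℝ :=
  ∏ j, π j (a j)

/-- Player `i`'s robust value
`V_i(π) = inf_{x ∈ ℛ_i(π)} Σ_a p_π(a) (r*_i(a) + x(a))`. -/
noncomputable def robustValue {N : ℕ} {A : Fin N → Type*} [∀ i, Fintype (A i)]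
    (rstar : (i : Fin N) → ((j : Fin N) → A j) → ℝ)
    (R : (i : Fin N) → ((j : Fin N) → A j → ℝ) → Set (((j : Fin N) → A j) → ℝ))
    (i : Fin N) (π : (j : Fin N) → A j → ℝ) : ℝ :=
  sInf {t : ℝ | ∃ x ∈ R i π,
    t = ∑ a : ((j : Fin N) → A j), jointProb π a * (rstar i a + x a)}

/-- The support function of `ℛ_i(π)` evaluated at `−π_i π_{-i}ᵀ`:
`σ_{ℛ_i(π)}(−π_i π_{-i}ᵀ) = sup_{x ∈ ℛ_i(π)} ⟨x, −π_i π_{-i}ᵀ⟩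
  = sup_{x ∈ ℛ_i(π)} (−Σ_a p_π(a) x(a))`. -/
noncomputable def suppAt {N : ℕ} {A : Fin N → Type*} [∀ i, Fintype (A i)]
    (R : (i : Fin N) → ((j : Fin N) → A j → ℝ) → Set (((j : Fin N) → A j) → ℝ))
    (i : Fin N) (π : (j : Fin N) → A j → ℝ) : ℝ :=
  sSup {t : ℝ | ∃ x ∈ R i π,
    t = -∑ a : ((j : Fin N) → A j), jointProb π a * x a}


/-- The regularized value `Ṽ_i(π) = Σ_a p_π(a) r*_i(a) − Ω_i(π)` with the
support-function regularizer `Ω_i(π) = σ_{ℛ_i(π)}(−π_i π_{-i}ᵀ)`. -/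
noncomputable def regValue {N : ℕ} {A : Fin N → Type*} [∀ i, Fintype (A i)]
    (rstar : (i : Fin N) → ((j : Fin N) → A j) → ℝ)
    (R : (i : Fin N) → ((j : Fin N) → A j → ℝ) → Set (((j : Fin N) → A j) → ℝ))
    (i : Fin N) (π : (j : Fin N) → A j → ℝ) : ℝ :=
  (∑ a : ((j : Fin N) → A j), jointProb π a * rstar i a) - suppAt R i π

/-- The robust value equals the regularized value wherever `ℛ_i(π)` is nonempty and the pairing
with `p_π` is bounded below on it. Both hypotheses keep the real-valued `sInf` and `sSup` away from
their junk values. -/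
lemma robustValue_eq_regValue {N : ℕ} {A : Fin N → Type*} [∀ i, Fintype (A i)]
    (rstar : (i : Fin N) → ((j : Fin N) → A j) → ℝ)
    (R : (i : Fin N) → ((j : Fin N) → A j → ℝ) → Set (((j : Fin N) → A j) → ℝ))
    (i : Fin N) (π : (j : Fin N) → A j → ℝ) (hne : (R i π).Nonempty)
    (hbdd : ∃ L : ℝ, ∀ x ∈ R i π,
      L ≤ ∑ a : ((j : Fin N) → A j), jointProb π a * x a) :
    robustValue rstar R i π = regValue rstar R i π := by
  obtain ⟨L, hL⟩ := hbdd
  obtain ⟨x₀, hx₀⟩ := hne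
  have hsup : IsLUB {t : ℝ | ∃ x ∈ R i π,
      t = -∑ a : ((j : Fin N) → A j), jointProb π a * x a} (suppAt R i π) := by
    refine isLUB_csSup ⟨_, x₀, hx₀, rfl⟩ ⟨-L, ?_⟩
    rintro t ⟨x, hx, rfl⟩
    exact neg_le_neg (hL x hx)
  unfold robustValue regValue
  refine IsGLB.csInf_eq ⟨?_, ?_⟩ ⟨_, x₀, hx₀, rfl⟩
  · rintro t ⟨x, hx, rfl⟩
    have h := hsup.1 ⟨x, hx, rfl⟩
    simp only [mul_add, Finset.sum_add_distrib]
    linarith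
  · intro b hb
    -- A lower bound `b` for the payoffs gives the upper bound `⟨p_π, r*_i⟩ - b` for `-⟨p_π, x⟩`.
    have h : suppAt R i π ≤ (∑ a : ((j : Fin N) → A j), jointProb π a * rstar i a) - b := by
      refine hsup.2 ?_
      rintro t ⟨x, hx, rfl⟩
      have h' := hb ⟨x, hx, rfl⟩
      simp only [mul_add, Finset.sum_add_distrib] at h'
      linarith
    linarith

/-- Theorem (robustness-regularization equivalence for matrix games):
under nonemptiness and boundedness-below of every uncertainty set at every
joint policy in `Π`, a joint policy `π ∈ Π` is a robust Nash equilibrium of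
the robust matrix game iff it is a Nash equilibrium of the regularized game
with regularizers `Ω_i(π) = σ_{ℛ_i(π)}(−π_i π_{-i}ᵀ)`. -/
theorem robustNE_iff_regularizedNE {N : ℕ} {A : Fin N → Type*}
    [∀ i, Fintype (A i)]
    (rstar : (i : Fin N) → ((j : Fin N) → A j) → ℝ)
    (R : (i : Fin N) → ((j : Fin N) → A j → ℝ) → Set (((j : Fin N) → A j) → ℝ))
    (hne : ∀ (i : Fin N) (π : (j : Fin N) → A j → ℝ),
      (∀ j, π j ∈ probSimplex (A j)) → (R i π).Nonempty)
    (hbdd : ∀ (i : Fin N) (π : (j : Fin N) → A j → ℝ),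
      (∀ j, π j ∈ probSimplex (A j)) →
      ∃ L : ℝ, ∀ x ∈ R i π,
        L ≤ ∑ a : ((j : Fin N) → A j), jointProb π a * x a)
    (π : (j : Fin N) → A j → ℝ) (hπ : ∀ j, π j ∈ probSimplex (A j)) :
    (∀ i, robustValue rstar R i π =
        sSup {t : ℝ | ∃ u ∈ probSimplex (A i),
          t = robustValue rstar R i (Function.update π i u)}) ↔
    (∀ i, regValue rstar R i π =
        sSup {t : ℝ | ∃ u ∈ probSimplex (A i),
          t = regValue rstar R i (Function.update π i u)}) := by
  have hupd : ∀ (i : Fin N) (u : A i → ℝ), u ∈ probSimplex (A i) →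
      ∀ j, Function.update π i u j ∈ probSimplex (A j) := by
    intro i u hu j
    rcases eq_or_ne j i with rfl | hj
    · simpa using hu
    · simpa [hj] using hπ j
  have hval : ∀ (i : Fin N) (ρ : (j : Fin N) → A j → ℝ), (∀ j, ρ j ∈ probSimplex (A j)) →
      robustValue rstar R i ρ = regValue rstar R i ρ := fun i ρ hρ =>
    robustValue_eq_regValue rstar R i ρ (hne i ρ hρ) (hbdd i ρ hρ)
  refine forall_congr' fun i => ?_
  have hset : {t : ℝ | ∃ u ∈ probSimplex (A i),
        t = robustValue rstar R i (Function.update π i u)} =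
      {t : ℝ | ∃ u ∈ probSimplex (A i),
        t = regValue rstar R i (Function.update π i u)} := by
    ext t
    refine exists_congr fun u => and_congr_right fun hu => ?_
    rw [hval i _ (hupd i u hu)]
  rw [hval i π hπ, hset]
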